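/- Invertibility of rational integers (norm −1 case): for every positive integer n there exists a sequence {h_k} ⊆ ℤ[θ] which is |·|_θ-Cauchy and satisfies |n·h_k − 1|_θ → 0 as k → ∞; that is, n is invertible in the inframetric completion of ℤ[θ]. -/

import Mathlib

/-!
Under Galois conjugation the infranorm becomes the usual absolute value near `0`, so inverting
`n` amounts to approximating the real number `1/n` by conjugates of elements of `ℤ[θ]`.

The key fact (`IsConjPair.exists_digits`) is that every nonnegative `x ∈ ℤ[θ]` whose conjugate
`x'` lies in `[-1, θ]` is a `θ`-integer. The digits are produced from the lowest one upwards: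
with `d = max 0 ⌈x' - θ⁻¹⌉`, the element `(x - d)/θ` is again nonnegative and has conjugate
`(d - x')θ ∈ [-1, θ]`; the real size drops by a factor `θ` at each step, and a nonnegative
element below `1` with conjugate in `[-1, θ]` is `0`. If the next digit is `a`, then
`d - 1 > x' - θ⁻¹`, which forces `d = 0`, so the expansion is admissible.

Dividing by `θ ^ K` multiplies the conjugate by `±θ ^ K`. Hence `|x'| ≤ θ ^ (-K)` gives
`v(x) ≥ K`, the defining supremum being finite because nonzero `θ`-integers have absolute value
at least `1` (`IsConjPair.thNorm_le`). Finally `⌊θ^{2k}/n⌋ θ^{2k}` has conjugate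
`⌊θ^{2k}/n⌋ θ^{-2k} → 1/n` (`exists_conj_tendsto`), so this sequence is Cauchy and inverts `n`.

Conjugates are tracked by pairs of reals sharing integer coordinates (`IsConjPair`), so the
irrationality of `θ` is never needed.
-/

noncomputable section

/-- The real quadratic unit `θ = (a + √(a²+4))/2`, the positive root of `θ² = aθ + 1`
(the norm `N(θ) = −1` case). -/
def theta (a : ℕ) : ℝ := ((a : ℝ) + Real.sqrt ((a : ℝ) ^ 2 + 4)) / 2

/-- The Galois conjugate `θ' = −θ⁻¹`. -/
def thetaConj (a : ℕ) : ℝ := -(theta a)⁻¹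

/-- Membership in the ring `ℤ[θ]`. -/
def inOK (a : ℕ) (x : ℝ) : Prop := ∃ p q : ℤ, x = (p : ℝ) + (q : ℝ) * theta a

/-- A finite integer sequence, supported in `[m, M]`, is admissible (norm `−1` case) if all its
entries lie in `{0, …, a}` and an entry equal to `a` is always followed (below) by a `0`. -/
def AdmissibleOn (a : ℕ) (m M : ℤ) (b : ℤ → ℤ) : Prop :=
  (∀ i, b i ≠ 0 → m ≤ i ∧ i ≤ M) ∧
  (∀ i, 0 ≤ b i ∧ b i ≤ (a : ℤ)) ∧
  (∀ i, b i = (a : ℤ) → b (i - 1) = 0)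

/-- The set `ℤ_θ` of θ-integers: signed sums `± Σ_{i=0}^{M} b_i θ^i` with `(b_i)` admissible. -/
def Ztheta (a : ℕ) : Set ℝ :=
  { x | ∃ (ε : ℤ) (M : ℤ) (b : ℤ → ℤ), (ε = 1 ∨ ε = -1) ∧ 0 ≤ M ∧
      AdmissibleOn a 0 M b ∧
      x = (ε : ℝ) * ∑ i ∈ Finset.Icc (0 : ℤ) M, (b i : ℝ) * theta a ^ i }

/-- `v(x) = max { k : ℤ | x / θ^k ∈ ℤ_θ }` (as a supremum in `ℤ`). -/
def vval (a : ℕ) (x : ℝ) : ℤ := sSup { k : ℤ | x / theta a ^ k ∈ Ztheta a }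

/-- The θ-adic infranorm `|x|_θ = θ^{−v(x)}`, with `|0|_θ = 0`. -/
def thNorm (a : ℕ) (x : ℝ) : ℝ := if x = 0 then 0 else theta a ^ (-vval a x)

/-- A sequence in `ℝ` is `|·|_θ`-Cauchy. -/
def IsThCauchy (a : ℕ) (x : ℕ → ℝ) : Prop :=
  ∀ ε : ℝ, 0 < ε → ∃ N : ℕ, ∀ i j : ℕ, N ≤ i → N ≤ j → thNorm a (x i - x j) < ε

/-! ### The unit `θ` -/

lemma one_lt_theta (a : ℕ) (ha : 1 ≤ a) : 1 < theta a := by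
  have h1 : (1 : ℝ) ≤ a := by exact_mod_cast ha
  have h2 : (2 : ℝ) ≤ Real.sqrt ((a : ℝ) ^ 2 + 4) := by
    apply Real.le_sqrt_of_sq_le
    nlinarith
  unfold theta
  linarith

lemma theta_sq (a : ℕ) : theta a ^ 2 = a * theta a + 1 := by
  have h : Real.sqrt ((a : ℝ) ^ 2 + 4) ^ 2 = (a : ℝ) ^ 2 + 4 := Real.sq_sqrt (by positivity)
  unfold theta
  nlinarith

lemma theta_inv (a : ℕ) (ha : 1 ≤ a) : (theta a)⁻¹ = theta a - a := by
  have h := theta_sq a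
  have h0 := one_lt_theta a ha
  have : theta a ≠ 0 := by linarith
  field_simp
  nlinarith

/-! ### Conjugate pairs -/

/-- `IsConjPair a x y` says that `x = p + qθ` and `y = p + qθ'` for some integers `p, q`, i.e.
`x ∈ ℤ[θ]` and `y` is its Galois conjugate. -/
def IsConjPair (a : ℕ) (x y : ℝ) : Prop :=
  ∃ p q : ℤ, x = p + q * theta a ∧ y = p + q * thetaConj a

lemma IsConjPair.sub {a : ℕ} {x y z w : ℝ} (h : IsConjPair a x y) (h' : IsConjPair a z w) :
    IsConjPair a (x - z) (y - w) := by
  obtain ⟨p, q, rfl, rfl⟩ := h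
  obtain ⟨r, s, rfl, rfl⟩ := h'
  exact ⟨p - r, q - s, by push_cast; ring, by push_cast; ring⟩

lemma IsConjPair.int (a : ℕ) (m : ℤ) : IsConjPair a m m := ⟨m, 0, by simp, by simp⟩

lemma IsConjPair.int_mul {a : ℕ} {x y : ℝ} (m : ℤ) (h : IsConjPair a x y) :
    IsConjPair a (m * x) (m * y) := by
  obtain ⟨p, q, rfl, rfl⟩ := h
  exact ⟨m * p, m * q, by push_cast; ring, by push_cast; ring⟩

lemma IsConjPair.mul_theta {a : ℕ} (ha : 1 ≤ a) {x y : ℝ} (h : IsConjPair a x y) :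
    IsConjPair a (x * theta a) (y * thetaConj a) := by
  obtain ⟨p, q, rfl, rfl⟩ := h
  have h1 := theta_sq a
  refine ⟨q, p + a * q, ?_, ?_⟩
  · push_cast
    linear_combination (q : ℝ) * h1
  · push_cast
    rw [thetaConj, theta_inv a ha]
    linear_combination (q : ℝ) * h1

lemma IsConjPair.div_theta {a : ℕ} (ha : 1 ≤ a) {x y : ℝ} (h : IsConjPair a x y) :
    IsConjPair a (x / theta a) (-(y * theta a)) := by
  obtain ⟨p, q, rfl, rfl⟩ := h
  have h1 := theta_sq a
  refine ⟨q - a * p, p, ?_, ?_⟩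
  · rw [div_eq_mul_inv, theta_inv a ha]
    push_cast
    linear_combination (q : ℝ) * h1
  · push_cast
    rw [thetaConj, theta_inv a ha]
    linear_combination (q : ℝ) * h1

lemma IsConjPair.theta_pow {a : ℕ} (ha : 1 ≤ a) (j : ℕ) :
    IsConjPair a (theta a ^ j) (thetaConj a ^ j) := by
  induction j with
  | zero => simpa using IsConjPair.int a 1
  | succ j ih => simpa [pow_succ] using ih.mul_theta ha

/-! ### Expansions of elements with bounded conjugate -/

/-- An element of `ℤ[θ] ∩ [0, 1)` whose conjugate lies in `[-1, θ]` vanishes: the difference of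
an element and its conjugate is an integer multiple of `θ + θ⁻¹ > 2`. -/
lemma IsConjPair.eq_zero {a : ℕ} (ha : 1 ≤ a) {x y : ℝ} (h : IsConjPair a x y)
    (hx0 : 0 ≤ x) (hx1 : x < 1) (hy0 : -1 ≤ y) (hy1 : y ≤ theta a) : x = 0 ∧ y = 0 := by
  obtain ⟨p, q, rfl, rfl⟩ := h
  have ht := one_lt_theta a ha
  have hi : 0 < (theta a)⁻¹ := by positivity
  have hm : theta a * (theta a)⁻¹ = 1 := mul_inv_cancel₀ (by linarith)
  simp only [thetaConj] at *
  have h2 : 2 < theta a + (theta a)⁻¹ := by nlinarith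
  have hq1 : q < 1 := by
    by_contra! hc
    have : (1 : ℝ) ≤ q := by exact_mod_cast hc
    nlinarith
  have hq2 : -1 < q := by
    by_contra! hc
    have : (q : ℝ) ≤ -1 := by exact_mod_cast hc
    nlinarith
  obtain rfl : q = 0 := by omega
  have hp0 : (0 : ℝ) ≤ p := by simpa using hx0
  have hp1 : (p : ℝ) < 1 := by simpa using hx1
  have hp0' : 0 ≤ p := by exact_mod_cast hp0
  have hp1' : p < 1 := by exact_mod_cast hp1
  obtain rfl : p = 0 := by omega
  simp

/-- The lowest digit of a `θ`-integer whose conjugate is `y`: the least nonnegative integer `d`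
with `y - d ≤ θ⁻¹`. -/
def lowDigit (a : ℕ) (y : ℝ) : ℤ := max 0 ⌈y - (theta a)⁻¹⌉

/-- Removing the lowest digit of a nonnegative element with conjugate at most `θ` keeps it
nonnegative. -/
lemma IsConjPair.lowDigit_le {a : ℕ} (ha : 1 ≤ a) {x y : ℝ} (h : IsConjPair a x y)
    (hx0 : 0 ≤ x) (hy1 : y ≤ theta a) : (lowDigit a y : ℝ) ≤ x := by
  obtain ⟨p, q, rfl, rfl⟩ := h
  have ht := one_lt_theta a ha
  have hi : 0 < (theta a)⁻¹ := by positivity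
  have hm : theta a * (theta a)⁻¹ = 1 := mul_inv_cancel₀ (by linarith)
  have hc := Int.ceil_lt_add_one ((p : ℝ) + q * thetaConj a - (theta a)⁻¹)
  unfold lowDigit
  push_cast
  refine max_le hx0 ?_
  by_cases hpos : (0 : ℤ) < ⌈(p : ℝ) + q * thetaConj a - (theta a)⁻¹⌉
  swap
  · have : ((⌈(p : ℝ) + q * thetaConj a - (theta a)⁻¹⌉ : ℤ) : ℝ) ≤ 0 := by
      exact_mod_cast not_lt.mp hpos
    linarith
  have hpos' : (1 : ℝ) ≤ (⌈(p : ℝ) + q * thetaConj a - (theta a)⁻¹⌉ : ℤ) := by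
    exact_mod_cast hpos
  rcases lt_trichotomy q 0 with hq | rfl | hq
  · have : (q : ℝ) ≤ -1 := by exact_mod_cast (by omega : q ≤ -1)
    simp only [thetaConj] at *
    nlinarith
  · have : ⌈(p : ℝ) + (0 : ℤ) * thetaConj a - (theta a)⁻¹⌉ ≤ p := by
      rw [Int.ceil_le]
      push_cast
      linarith
    have h2 : ((⌈(p : ℝ) + (0 : ℤ) * thetaConj a - (theta a)⁻¹⌉ : ℤ) : ℝ) ≤ p := by
      exact_mod_cast this
    simpa using h2
  · have : (1 : ℝ) ≤ q := by exact_mod_cast hq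
    simp only [thetaConj] at *
    nlinarith

/-- Greedy-type expansion driven by the conjugate: a nonnegative `x ∈ ℤ[θ]` whose conjugate lies
in `[-1, θ]` has an admissible expansion with nonnegative exponents. The first digit is recorded
so that the admissibility condition survives the induction. -/
lemma IsConjPair.exists_digits {a : ℕ} (ha : 1 ≤ a) (N : ℕ) {x y : ℝ} (h : IsConjPair a x y)
    (hx0 : 0 ≤ x) (hxN : x < theta a ^ N) (hy0 : -1 ≤ y) (hy1 : y ≤ theta a) :
    ∃ b : ℕ → ℤ, b 0 = lowDigit a y ∧ (∀ i, 0 ≤ b i ∧ b i ≤ a) ∧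
      (∀ i, b (i + 1) = a → b i = 0) ∧ (∀ i, N ≤ i → b i = 0) ∧
      x = ∑ i ∈ Finset.range N, (b i : ℝ) * theta a ^ i := by
  have ht := one_lt_theta a ha
  have hi : 0 < (theta a)⁻¹ := by positivity
  have hm : theta a * (theta a)⁻¹ = 1 := mul_inv_cancel₀ (by linarith)
  have hinv := theta_inv a ha
  have ha' : (1 : ℤ) ≤ a := by exact_mod_cast ha
  induction N generalizing x y with
  | zero =>
    obtain ⟨rfl, rfl⟩ := h.eq_zero ha hx0 (by simpa using hxN) hy0 hy1
    refine ⟨fun _ => 0, ?_, ?_, ?_, ?_, ?_⟩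
    · have : ⌈(0 : ℝ) - (theta a)⁻¹⌉ ≤ 0 := by
        rw [Int.ceil_le]
        push_cast
        linarith
      simp only [lowDigit]
      omega
    · intro i
      simp
    · simp
    · simp
    · simp
  | succ N ih =>
    set d := lowDigit a y with hd
    have hdx : (d : ℝ) ≤ x := h.lowDigit_le ha hx0 hy1
    have hd0 : 0 ≤ d := le_max_left _ _
    have hda : d ≤ a := by
      refine max_le (by omega) ?_
      rw [Int.ceil_le]
      push_cast
      linarith
    have hdc : y - (theta a)⁻¹ ≤ d :=
      (Int.le_ceil _).trans (by exact_mod_cast le_max_right _ _)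
    -- Either the digit is `0`, or it is the ceiling itself.
    have hdcase : d = 0 ∨ (d : ℝ) < y - (theta a)⁻¹ + 1 := by
      rcases max_choice 0 ⌈y - (theta a)⁻¹⌉ with hc | hc
      · exact Or.inl hc
      · right
        rw [hd, lowDigit, hc]
        exact Int.ceil_lt_add_one _
    have hd0' : (0 : ℝ) ≤ d := by exact_mod_cast hd0
    have hpair := (h.sub (IsConjPair.int a d)).div_theta ha
    have hx0' : 0 ≤ (x - d) / theta a := div_nonneg (by linarith) (by linarith)
    have hxN' : (x - d) / theta a < theta a ^ N := by
      rw [div_lt_iff₀ (by linarith), ← pow_succ]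
      linarith
    have hlow : -1 ≤ -((y - d) * theta a) := by nlinarith
    have hup : -((y - d) * theta a) ≤ theta a := by
      rcases hdcase with hc | hc
      · rw [hc]
        push_cast
        nlinarith
      · nlinarith
    obtain ⟨b, hb0, hb1, hb2, hb3, hb4⟩ := ih hpair hx0' hxN' hlow hup
    refine ⟨fun i => Nat.casesOn i d b, rfl, ?_, ?_, ?_, ?_⟩
    · rintro (_ | i)
      · exact ⟨hd0, hda⟩
      · exact hb1 i
    · rintro (_ | i) hbi
      · -- A second digit `a` forces `d - 1 > y - θ⁻¹`, so `d` is not the ceiling.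
        change b 0 = a at hbi
        change d = 0
        rcases hdcase with hc | hc
        · exact hc
        exfalso
        rw [hb0] at hbi
        have hceil : ⌈-((y - d) * theta a) - (theta a)⁻¹⌉ = a := by
          rcases max_choice 0 ⌈-((y - d) * theta a) - (theta a)⁻¹⌉ with hc' | hc'
          · rw [lowDigit, hc'] at hbi
            omega
          · rw [lowDigit, hc'] at hbi
            exact hbi
        have h3 := Int.ceil_lt_add_one (-((y - d) * theta a) - (theta a)⁻¹)
        rw [hceil] at h3
        push_cast at h3
        nlinarith
      · exact hb2 i hbi
    · rintro (_ | i) hNi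
      · omega
      · exact hb3 i (by omega)
    · rw [Finset.sum_range_succ']
      have h4 : x = theta a * ((x - d) / theta a) + d := by
        field_simp
        ring
      rw [h4, hb4, Finset.mul_sum]
      refine congrArg₂ (· + ·) (Finset.sum_congr rfl fun i _ => ?_) (by simp)
      change theta a * ((b i : ℝ) * theta a ^ i) = (b i : ℝ) * theta a ^ (i + 1)
      ring

/-- Elements of `ℤ[θ]` with conjugate in `[-1, 1]` are `θ`-integers. -/
lemma IsConjPair.mem_Ztheta {a : ℕ} (ha : 1 ≤ a) {x y : ℝ} (h : IsConjPair a x y)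
    (hy : |y| ≤ 1) : x ∈ Ztheta a := by
  have ht := one_lt_theta a ha
  have key : ∀ x y : ℝ, IsConjPair a x y → |y| ≤ 1 → 0 ≤ x → ∃ (M : ℤ) (b : ℤ → ℤ), 0 ≤ M ∧
      AdmissibleOn a 0 M b ∧ x = ∑ i ∈ Finset.Icc (0 : ℤ) M, (b i : ℝ) * theta a ^ i := by
    intro x y h hy hx
    obtain ⟨hy0, hy1⟩ := abs_le.mp hy
    obtain ⟨N, hN⟩ := pow_unbounded_of_one_lt x ht
    obtain ⟨b, -, hb1, hb2, hb3, hb4⟩ := h.exists_digits ha N hx hN hy0 (by linarith)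
    refine ⟨N, fun z => if 0 ≤ z then b z.toNat else 0, by omega, ⟨?_, ?_, ?_⟩, ?_⟩
    · intro i hi
      by_cases h0 : 0 ≤ i
      · refine ⟨h0, ?_⟩
        by_contra! hc
        simp only [h0, if_true] at hi
        exact hi (hb3 _ (by omega))
      · simp [h0] at hi
    · intro i
      dsimp only
      split_ifs
      · exact hb1 _
      · omega
    · intro i hi
      dsimp only at hi ⊢
      split_ifs at hi ⊢ with h0 h1
      · apply hb2
        rwa [show (i - 1).toNat + 1 = i.toNat by omega]
      all_goals omega
    · rw [hb4]
      refine (Finset.sum_subset (Finset.range_mono (Nat.le_succ N)) ?_).trans ?_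
      · intro i _ hi
        rw [hb3 i (by simpa using hi)]
        simp
      · refine Finset.sum_bij (fun i _ => (i : ℤ)) ?_ ?_ ?_ ?_
        · intro i hi
          simp only [Finset.mem_range, Finset.mem_Icc] at *
          omega
        · intro i _ j _ hij
          exact_mod_cast hij
        · intro z hz
          simp only [Finset.mem_Icc] at hz
          exact ⟨z.toNat, by simp only [Finset.mem_range]; omega, by omega⟩
        · intro i _
          simp
  rcases le_total 0 x with hx | hx
  · obtain ⟨M, b, h1, h2, h3⟩ := key x y h hy hx
    exact ⟨1, M, b, Or.inl rfl, h1, h2, by simpa using h3⟩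
  · have hneg : IsConjPair a (-x) (-y) := by simpa using h.int_mul (-1)
    obtain ⟨M, b, h1, h2, h3⟩ := key (-x) (-y) hneg (by simpa using hy) (by linarith)
    refine ⟨-1, M, b, Or.inr rfl, h1, h2, ?_⟩
    push_cast
    rw [← h3]
    ring

lemma IsConjPair.div_pow_mem {a : ℕ} (ha : 1 ≤ a) (K : ℕ) {x y : ℝ} (h : IsConjPair a x y)
    (hy : |y| * theta a ^ K ≤ 1) : x / theta a ^ K ∈ Ztheta a := by
  have ht := one_lt_theta a ha
  induction K generalizing x y with
  | zero => simpa using h.mem_Ztheta ha (by simpa using hy)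
  | succ K ih =>
    have := ih (h.div_theta ha) (by
      rw [abs_neg, abs_mul, abs_of_pos (by linarith : 0 < theta a)]
      calc _ = |y| * theta a ^ (K + 1) := by ring
        _ ≤ 1 := hy)
    rwa [div_div, ← pow_succ'] at this

/-! ### The infranorm and the conjugate -/

lemma one_le_abs_of_mem_Ztheta {a : ℕ} (ha : 1 ≤ a) {x : ℝ} (hx : x ∈ Ztheta a) (h0 : x ≠ 0) :
    1 ≤ |x| := by
  have ht := one_lt_theta a ha
  obtain ⟨ε, M, b, hε, -, ⟨-, hb, -⟩, rfl⟩ := hx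
  have hnn : ∀ i ∈ Finset.Icc (0 : ℤ) M, 0 ≤ (b i : ℝ) * theta a ^ i := by
    intro i _
    have : (0 : ℝ) ≤ b i := by exact_mod_cast (hb i).1
    positivity
  obtain ⟨i, hi, hbi⟩ := Finset.exists_ne_zero_of_sum_ne_zero (right_ne_zero_of_mul h0)
  have hb1 : (1 : ℝ) ≤ b i := by
    have h1 : b i ≠ 0 := by
      rintro h
      simp [h] at hbi
    have h2 := (hb i).1
    exact_mod_cast (by omega : 1 ≤ b i)
  have hp : 1 ≤ theta a ^ i := one_le_zpow₀ ht.le (Finset.mem_Icc.mp hi).1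
  have hle := Finset.single_le_sum hnn hi
  have h1 : 1 ≤ ∑ i ∈ Finset.Icc (0 : ℤ) M, (b i : ℝ) * theta a ^ i := by nlinarith
  have hεa : |(ε : ℝ)| = 1 := by rcases hε with rfl | rfl <;> simp
  rw [abs_mul, hεa, one_mul]
  exact h1.trans (le_abs_self _)

/-- The supremum defining `v(x)` is taken over a set bounded above, since nonzero `θ`-integers
have absolute value at least `1`. -/
lemma bddAbove_vval_set {a : ℕ} (ha : 1 ≤ a) {x : ℝ} (hx : x ≠ 0) :
    BddAbove {k : ℤ | x / theta a ^ k ∈ Ztheta a} := by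
  have ht := one_lt_theta a ha
  obtain ⟨N, hN⟩ := pow_unbounded_of_one_lt |x| ht
  refine ⟨N, fun k hk => ?_⟩
  have hpos : 0 < theta a ^ k := by positivity
  have h1 := one_le_abs_of_mem_Ztheta ha hk (div_ne_zero hx hpos.ne')
  rw [abs_div, abs_of_pos hpos, one_le_div hpos] at h1
  have h2 : theta a ^ k < theta a ^ (N : ℤ) := by
    rw [zpow_natCast]
    linarith
  exact ((zpow_lt_zpow_iff_right₀ ht).mp h2).le

/-- The infranorm is controlled by the conjugate: `|x'| ≤ θ^{-K}` implies `|x|_θ ≤ θ^{-K}`. -/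
lemma IsConjPair.thNorm_le {a : ℕ} (ha : 1 ≤ a) (K : ℕ) {x y : ℝ} (h : IsConjPair a x y)
    (hy : |y| * theta a ^ K ≤ 1) : thNorm a x ≤ (theta a ^ K)⁻¹ := by
  have ht := one_lt_theta a ha
  unfold thNorm
  split_ifs with hx
  · positivity
  · rw [← zpow_natCast, ← zpow_neg]
    apply zpow_le_zpow_right₀ ht.le
    have : (K : ℤ) ≤ vval a x :=
      le_csSup (bddAbove_vval_set ha hx) (by simpa using h.div_pow_mem ha K hy)
    omega

/-- Elements of `ℤ[θ]` with small conjugate have small infranorm. -/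
lemma exists_thNorm_lt {a : ℕ} (ha : 1 ≤ a) {ε : ℝ} (hε : 0 < ε) :
    ∃ δ > 0, ∀ x y : ℝ, IsConjPair a x y → |y| ≤ δ → thNorm a x < ε := by
  have ht := one_lt_theta a ha
  obtain ⟨K, hK⟩ := pow_unbounded_of_one_lt ε⁻¹ ht
  have hpos : 0 < theta a ^ K := by positivity
  refine ⟨(theta a ^ K)⁻¹, by positivity, fun x y h hy => ?_⟩
  refine (h.thNorm_le ha K ?_).trans_lt (inv_lt_of_inv_lt₀ hε hK)
  calc |y| * theta a ^ K ≤ (theta a ^ K)⁻¹ * theta a ^ K := by gcongr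
    _ = 1 := inv_mul_cancel₀ hpos.ne'

lemma thNorm_nonneg {a : ℕ} (ha : 1 ≤ a) (x : ℝ) : 0 ≤ thNorm a x := by
  have ht := one_lt_theta a ha
  unfold thNorm
  split_ifs <;> positivity

/-! ### Density of conjugates and inversion of `n` -/

/-- `ℤ[θ]` is dense under conjugation: every real `r` is the limit of conjugates. The witnesses
are `⌊θ^{2k} r⌋ θ^{2k}`, with conjugates `⌊θ^{2k} r⌋ θ^{-2k}`. -/
lemma exists_conj_tendsto {a : ℕ} (ha : 1 ≤ a) (r : ℝ) :
    ∃ x y : ℕ → ℝ, (∀ k, IsConjPair a (x k) (y k)) ∧ Filter.Tendsto y Filter.atTop (nhds r) := by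
  have ht := one_lt_theta a ha
  refine ⟨fun k => (⌊theta a ^ (2 * k) * r⌋ : ℤ) * theta a ^ (2 * k),
    fun k => (⌊theta a ^ (2 * k) * r⌋ : ℤ) * thetaConj a ^ (2 * k),
    fun k => (IsConjPair.theta_pow ha _).int_mul _, ?_⟩
  have hc : ∀ k, thetaConj a ^ (2 * k) = (theta a ^ (2 * k))⁻¹ := by
    intro k
    rw [thetaConj, Even.neg_pow (even_two_mul k), inv_pow]
  simp only [hc]
  have hT : Filter.Tendsto (fun k : ℕ => theta a ^ (2 * k)) Filter.atTop Filter.atTop :=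
    (tendsto_pow_atTop_atTop_of_one_lt ht).comp
      (Filter.tendsto_atTop_mono (fun k => by simp only [id]; omega) Filter.tendsto_id)
  have hI := tendsto_inv_atTop_zero.comp hT
  refine tendsto_of_tendsto_of_tendsto_of_le_of_le
    (g := fun k => r - (theta a ^ (2 * k))⁻¹) (h := fun _ => r) ?_ tendsto_const_nhds ?_ ?_
  · simpa using tendsto_const_nhds.sub hI
  · intro k
    have hpos : 0 < theta a ^ (2 * k) := by positivity
    have := Int.lt_floor_add_one (theta a ^ (2 * k) * r)
    dsimp only
    rw [← div_eq_mul_inv, le_div_iff₀ hpos, sub_mul, inv_mul_cancel₀ hpos.ne']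
    linarith
  · intro k
    have hpos : 0 < theta a ^ (2 * k) := by positivity
    have := Int.floor_le (theta a ^ (2 * k) * r)
    dsimp only
    rw [← div_eq_mul_inv, div_le_iff₀ hpos]
    linarith

/-- Invertibility of rational integers, norm `−1` case. For every positive
integer `n` there is a `|·|_θ`-Cauchy sequence `{h_k} ⊆ ℤ[θ]` with `|n·h_k − 1|_θ → 0`; that
is, `n` is invertible in the inframetric completion of `ℤ[θ]`. -/
theorem nat_invertible_in_completion (a : ℕ) (ha : 1 ≤ a) (n : ℕ) (hn : 0 < n) :
    ∃ h : ℕ → ℝ, (∀ k, inOK a (h k)) ∧ IsThCauchy a h ∧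
      Filter.Tendsto (fun k => thNorm a ((n : ℝ) * h k - 1)) Filter.atTop (nhds 0) := by
  obtain ⟨x, y, hxy, hy⟩ := exists_conj_tendsto ha ((n : ℝ)⁻¹)
  have hn' : (n : ℝ) ≠ 0 := by exact_mod_cast hn.ne'
  refine ⟨x, fun k => ?_, fun ε hε => ?_, ?_⟩
  · obtain ⟨p, q, h, -⟩ := hxy k
    exact ⟨p, q, h⟩
  · obtain ⟨δ, hδ, H⟩ := exists_thNorm_lt ha hε
    obtain ⟨N, hN⟩ := Metric.cauchySeq_iff.mp hy.cauchySeq δ hδ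
    exact ⟨N, fun i j hi hj => H _ _ ((hxy i).sub (hxy j)) (hN i hi j hj).le⟩
  · rw [Metric.tendsto_atTop]
    intro ε hε
    obtain ⟨δ, hδ, H⟩ := exists_thNorm_lt ha hε
    have hlim : Filter.Tendsto (fun k => (n : ℝ) * y k) Filter.atTop (nhds 1) := by
      simpa [hn'] using hy.const_mul (n : ℝ)
    obtain ⟨N, hN⟩ := Metric.tendsto_atTop.mp hlim δ hδ
    refine ⟨N, fun k hk => ?_⟩
    rw [Real.dist_0_eq_abs, abs_of_nonneg (thNorm_nonneg ha _)]
    refine H _ ((n : ℝ) * y k - 1) ?_ (hN k hk).le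
    simpa using ((hxy k).int_mul n).sub (IsConjPair.int a 1)
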